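/- Let m ≥ 4 and q = 2^m. Let f : F_{q²} → F_{q²} be given by f(x) = x^{3q} + a₁x^{2q+1} + a₂x^{q+2} + a₃x³ where a₁ ∈ F_q, a₂ ∈ F_{q²}*, a₃ ∈ F_{q²}, and assume a₁/a₂ ∈ U. If f is APN, then m is even, and furthermore either a₁, a₂, a₃ ∈ F_q, or there exist u, z ∈ U such that a₁ = (u³+z)²/(u(u²+z)²), a₂ = (u³+z)²/(u²+z)², and a₃ = uz²(u+1)²/(u²+z)². -/

import Mathlib

/-- `f` is almost perfect nonlinear (APN): for every `a ≠ 0` and every `b`, the equation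
`f (x + a) + f x = b` has at most two solutions `x`. -/
def IsAPN {F : Type*} [Field F] (f : F → F) : Prop :=
  ∀ a : F, a ≠ 0 → ∀ b : F, {x : F | f (x + a) + f x = b}.ncard ≤ 2

/-- `L` is an affine permutation: it is bijective and `x ↦ L x - L 0` is additive
(over a field of characteristic 2, additive maps are exactly the `𝔽₂`-linear ones). -/
def IsAffinePerm {F : Type*} [Field F] (L : F → F) : Prop :=
  Function.Bijective L ∧ ∀ x y : F, L (x + y) + L 0 = L x + L y

/-- `f` and `g` are affine equivalent: `g = L₁ ∘ f ∘ L₂` for affine permutations `L₁, L₂`. -/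
def AffEquiv {F : Type*} [Field F] (f g : F → F) : Prop :=
  ∃ L₁ L₂ : F → F, IsAffinePerm L₁ ∧ IsAffinePerm L₂ ∧ ∀ x : F, g x = L₁ (f (L₂ x))

/-!
Write `σ x = x ^ q`. Dividing the derivative of `f` in direction `v` by `v ^ 3` gives an equation in
`y`, `σ y` and `t = σ v / v ∈ U`. Put `u = a₂ / a₁ ∈ U`. For `y ∉ {0, 1}`, the equation and its
conjugate determine `s = σ y + y` and `Y = y ^ 2 + y` as rational functions of `t`; here `s` has
double zeros at two points `z`, `z'`, and its poles outside `{0, ∞}` are `z ^ 2 / u` and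
`z' ^ 2 / u`. With `T x = x + x ^ 2 + ⋯ + x ^ (q / 2)`, such a `y` exists if `T Y = s ≠ 0`, and the
only alternative is `T Y = s + 1`. Hence for an APN function `T Y + s = 1` for all `t ∈ U` other
than `z`, `z'` and the poles. Subtracting `g ^ 2 + g` from `Y` for a suitable `g` makes this
condition tractable.

* If `z ≠ z'` both lie on `U`, a Möbius parametrization of `U` by `𝔽_q` turns the condition into one
  on `T (w x + w' / x)`; multiplying by `x ^ 3` and `x ^ 5` and summing over `𝔽_q` gives `z = z'`.
* If `z = z'`, summing the condition itself over a parametrization of `U` gives `0 = 1`.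
* Otherwise `z`, `z'` are swapped by `x ↦ (σ x)⁻¹`, and the condition is a polynomial identity with
  more roots on `U` than its degree. So the residues vanish, that is, `z ^ 2 = u z'` and
  `z' ^ 2 = u z`, and `z / u` is a primitive cube root of unity in `𝔽_q`.
-/

section UnitCircle

variable {F : Type*} [Field F] {σ : F →+* F} {t : F}

/-- `t` lies on the unit circle of the involution `σ`. For `σ x = x ^ q` on the field of order
`q ^ 2` this is the group `U` of `(q + 1)`-st roots of unity. -/
def IsUnimodular (σ : F →+* F) (t : F) : Prop :=
  t * σ t = 1

namespace IsUnimodular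

lemma ne_zero (ht : IsUnimodular σ t) : t ≠ 0 :=
  left_ne_zero_of_mul_eq_one ht

lemma map_eq_inv (ht : IsUnimodular σ t) : σ t = t⁻¹ :=
  eq_inv_of_mul_eq_one_right ht

lemma of_sq [CharP F 2] (ht : IsUnimodular σ (t ^ 2)) : IsUnimodular σ t := by
  rw [IsUnimodular, map_pow, ← mul_pow] at ht
  exact CharTwo.sq_inj.1 (ht.trans (one_pow 2).symm)

lemma exists_map_eq_mul [CharP F 2] (hσ : Function.Involutive σ) (ht : IsUnimodular σ t) :
    ∃ v ≠ 0, σ v = t * v := by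
  by_cases h : σ t = 1
  · exact ⟨1, one_ne_zero, by rw [IsUnimodular, h] at ht; rw [map_one, ht]⟩
  · refine ⟨1 + σ t, fun h' => h (CharTwo.add_eq_zero.1 h').symm, ?_⟩
    rw [map_add, map_one, hσ t, mul_add, mul_one, ht, add_comm]

end IsUnimodular

end UnitCircle

section Trace

variable {F : Type*} [Field F] [CharP F 2] {m : ℕ}

variable (F m) in
/-- The polynomial map `x + x ^ 2 + x ^ 4 + ⋯ + x ^ 2 ^ (m - 1)`. On the field of order `2 ^ m` it
is the absolute trace, but it is used on the quadratic extension of that field. -/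
def partialTrace : F →+ F :=
  ∑ i ∈ Finset.range m, (iterateFrobenius F 2 i : F →+ F)

lemma partialTrace_apply (x : F) : partialTrace F m x = ∑ i ∈ Finset.range m, x ^ 2 ^ i := by
  simp [partialTrace, AddMonoidHom.finsetSum_apply, iterateFrobenius_def]

lemma partialTrace_sq_add_self (x : F) :
    partialTrace F m (x ^ 2 + x) = iterateFrobenius F 2 m x + x := by
  have telescope := Finset.sum_range_sub (fun i => x ^ 2 ^ i) m
  rw [pow_zero, pow_one, CharTwo.sub_eq_add] at telescope
  rw [iterateFrobenius_def, ← telescope, partialTrace_apply]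
  refine Finset.sum_congr rfl fun i _ => ?_
  rw [add_pow_char_pow, ← pow_mul, ← pow_succ', CharTwo.sub_eq_add]

lemma partialTrace_sq (x : F) : partialTrace F m (x ^ 2) = partialTrace F m x ^ 2 := by
  simp only [partialTrace_apply, CharTwo.sum_sq, ← pow_mul, mul_comm]

lemma map_partialTrace (σ : F →+* F) (x : F) :
    σ (partialTrace F m x) = partialTrace F m (σ x) := by
  simp only [partialTrace_apply, map_sum, map_pow]

lemma partialTrace_two_mul (x : F) :
    partialTrace F (2 * m) x =
      partialTrace F m x + iterateFrobenius F 2 m (partialTrace F m x) := by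
  rw [map_partialTrace, partialTrace_apply, two_mul, Finset.sum_range_add, partialTrace_apply,
    partialTrace_apply, iterateFrobenius_def]
  simp only [pow_add, pow_mul]

variable (F) in
/-- The additive map `y ↦ y ^ 2 + y`. -/
def artinSchreierMap : F →+ F :=
  (frobenius F 2 : F →+ F) + AddMonoidHom.id F

lemma artinSchreierMap_apply (y : F) : artinSchreierMap F y = y ^ 2 + y := rfl

lemma card_ker_artinSchreierMap : Nat.card (artinSchreierMap F).ker = 2 := by
  have hker : ((artinSchreierMap F).ker : Set F) = {0, 1} := by
    ext y
    rw [SetLike.mem_coe, AddMonoidHom.mem_ker, artinSchreierMap_apply,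
      show y ^ 2 + y = y * (y + 1) by ring, mul_eq_zero, CharTwo.add_eq_zero]
    rfl
  rw [← SetLike.coe_sort_coe, hker, Nat.card_coe_set_eq, Set.ncard_pair zero_ne_one]

variable [Fintype F]

lemma partialTrace_eq_algebraMap_trace (hF : Fintype.card F = 2 ^ m) (x : F) :
    letI := ZMod.algebra F 2
    partialTrace F m x = algebraMap (ZMod 2) F (Algebra.trace (ZMod 2) F x) := by
  let := ZMod.algebra F 2
  have hrank : Module.finrank (ZMod 2) F = m := by
    have hpow := Module.card_eq_pow_finrank (K := ZMod 2) (V := F)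
    rw [ZMod.card, hF] at hpow
    exact (Nat.pow_right_injective le_rfl hpow).symm
  rw [FiniteField.algebraMap_trace_eq_sum_pow, hrank, Nat.card_zmod, partialTrace_apply]

lemma exists_sq_add_self_eq (hF : Fintype.card F = 2 ^ m) {k : F} (hk : partialTrace F m k = 0) :
    ∃ y, y ^ 2 + y = k := by
  let := ZMod.algebra F 2
  let tr : F →+ ZMod 2 := (Algebra.trace (ZMod 2) F).toAddMonoidHom
  have mem_ker (x : F) : x ∈ tr.ker ↔ partialTrace F m x = 0 := by
    rw [partialTrace_eq_algebraMap_trace hF, map_eq_zero, AddMonoidHom.mem_ker]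
    rfl
  have hle : (artinSchreierMap F).range ≤ tr.ker := by
    rintro _ ⟨y, rfl⟩
    rw [mem_ker, artinSchreierMap_apply, partialTrace_sq_add_self, iterateFrobenius_def, ← hF,
      FiniteField.pow_card, CharTwo.add_self_eq_zero]
  have card_ker : Nat.card tr.ker * 2 = Nat.card F := by
    have htop : tr.range = ⊤ := AddMonoidHom.range_eq_top.2 (Algebra.trace_surjective (ZMod 2) F)
    rw [← tr.ker.card_mul_index, AddSubgroup.index_ker, htop, AddSubgroup.card_top, Nat.card_zmod]
  have card_range : Nat.card (artinSchreierMap F).range * 2 = Nat.card F := by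
    rw [← (artinSchreierMap F).ker.card_mul_index, AddSubgroup.index_ker,
      card_ker_artinSchreierMap, mul_comm]
  have heq := AddSubgroup.eq_of_le_of_card_ge hle (by omega)
  exact heq.ge ((mem_ker k).2 hk)

lemma iterateFrobenius_involutive (hF : Fintype.card F = 2 ^ (2 * m)) :
    Function.Involutive (iterateFrobenius F 2 m) := fun x => by
  rw [iterateFrobenius_def, iterateFrobenius_def, ← pow_mul, ← pow_add, ← two_mul, ← hF,
    FiniteField.pow_card]

lemma exists_sq_add_self_eq_of_map_partialTrace (hF : Fintype.card F = 2 ^ (2 * m)) {k : F}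
    (hk : iterateFrobenius F 2 m (partialTrace F m k) = partialTrace F m k) :
    ∃ y, y ^ 2 + y = k :=
  exists_sq_add_self_eq hF <| by rw [partialTrace_two_mul, hk, CharTwo.add_self_eq_zero]

end Trace

section PowerSums

variable {F : Type*} [Field F] [Fintype F]

lemma exists_isPrimitiveRoot_of_dvd_card_sub_one {d : ℕ} (hd : d ∣ Fintype.card F - 1) :
    ∃ ζ : Fˣ, IsPrimitiveRoot (ζ : F) d := by
  obtain ⟨g, hg⟩ := IsCyclic.exists_ofOrder_eq_natCard (α := Fˣ)
  rw [Nat.card_units, Nat.card_eq_fintype_card] at hg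
  have hpos : 0 < orderOf g := orderOf_pos g
  obtain ⟨e, he⟩ := hd
  exact ⟨g ^ e, IsPrimitiveRoot.coe_units_iff.2 <|
    (IsPrimitiveRoot.orderOf g).pow hpos (by rw [hg, he, mul_comm])⟩

variable [CharP F 2] {m : ℕ}

open Classical in
variable (F m) in
/-- The elements fixed by `x ↦ x ^ 2 ^ m`, that is, the subfield `𝔽_q`, as a finset. -/
noncomputable def frobeniusFixed : Finset F :=
  {x | iterateFrobenius F 2 m x = x}

lemma mem_frobeniusFixed {x : F} : x ∈ frobeniusFixed F m ↔ iterateFrobenius F 2 m x = x := by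
  simp [frobeniusFixed]

lemma exists_isPrimitiveRoot_mem_frobeniusFixed (hF : Fintype.card F = 2 ^ (2 * m)) :
    ∃ ζ : Fˣ, (ζ : F) ∈ frobeniusFixed F m ∧ IsPrimitiveRoot (ζ : F) (2 ^ m - 1) := by
  have hdvd : 2 ^ m - 1 ∣ Fintype.card F - 1 := by
    rw [hF, mul_comm, pow_mul]
    simpa using Nat.sub_dvd_pow_sub_pow (2 ^ m) 1 2
  obtain ⟨ζ, hζ⟩ := exists_isPrimitiveRoot_of_dvd_card_sub_one hdvd
  refine ⟨ζ, mem_frobeniusFixed.2 ?_, hζ⟩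
  rw [iterateFrobenius_def, ← Nat.sub_add_cancel (Nat.one_le_two_pow (n := m)), pow_succ,
    hζ.pow_eq_one, one_mul]

lemma exists_mem_frobeniusFixed_ne (hm : 2 ≤ m) (hF : Fintype.card F = 2 ^ (2 * m)) :
    ∃ y ∈ frobeniusFixed F m, y ≠ 0 ∧ y ≠ 1 := by
  obtain ⟨ζ, hζK, hζ⟩ := exists_isPrimitiveRoot_mem_frobeniusFixed hF
  have : 2 ^ 2 ≤ 2 ^ m := Nat.pow_le_pow_right two_pos hm
  exact ⟨ζ, hζK, ζ.ne_zero, hζ.ne_one (by omega)⟩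

lemma sum_frobeniusFixed_zpow (hF : Fintype.card F = 2 ^ (2 * m)) {n : ℤ}
    (hn : ¬ (2 ^ m - 1 : ℤ) ∣ n) : ∑ x ∈ frobeniusFixed F m, x ^ n = 0 := by
  obtain ⟨ζ, hζK, hζ⟩ := exists_isPrimitiveRoot_mem_frobeniusFixed hF
  rw [mem_frobeniusFixed] at hζK
  have hshift :
      ∑ x ∈ frobeniusFixed F m, x ^ n = (ζ : F) ^ n * ∑ x ∈ frobeniusFixed F m, x ^ n := by
    rw [Finset.mul_sum]
    refine Finset.sum_nbij' (ζ⁻¹ * ·) (ζ * ·) ?_ ?_ ?_ ?_ ?_ <;>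
      simp +contextual [mem_frobeniusFixed, hζK, mul_zpow, zpow_ne_zero]
  have hζn : (ζ : F) ^ n ≠ 1 := fun h => hn <| by
    simpa [Nat.cast_sub Nat.one_le_two_pow] using (hζ.zpow_eq_one_iff_dvd n).1 h
  exact (mul_eq_zero.1 (show ((ζ : F) ^ n - 1) * ∑ x ∈ frobeniusFixed F m, x ^ n = 0 by
    rw [sub_mul, one_mul, ← hshift, sub_self])).resolve_left (sub_ne_zero.2 hζn)

lemma sum_frobeniusFixed_pow (hF : Fintype.card F = 2 ^ (2 * m)) {j : ℕ} (hj : j < 2 ^ m - 1) :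
    ∑ x ∈ frobeniusFixed F m, x ^ j = 0 := by
  rcases j.eq_zero_or_pos with rfl | hpos
  · refine Finset.sum_involution (fun x _ => x + 1) ?_ ?_ ?_ ?_ <;>
      simp +contextual [mem_frobeniusFixed, CharTwo.add_self_eq_zero, add_assoc]
  · have hndvd : ¬ (2 ^ m - 1 : ℤ) ∣ (j : ℤ) := fun h => by
      have := Int.le_of_dvd (by exact_mod_cast hpos) h
      have : ((2 ^ m : ℕ) : ℤ) - 1 ≤ j := by exact_mod_cast this
      omega
    simpa only [zpow_natCast] using sum_frobeniusFixed_zpow hF hndvd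

lemma sum_frobeniusFixed_add_pow (hF : Fintype.card F = 2 ^ (2 * m)) {j : ℕ}
    (hj : j < 2 ^ m - 1) (θ : F) : ∑ x ∈ frobeniusFixed F m, (x + θ) ^ j = 0 := by
  simp only [add_pow]
  rw [Finset.sum_comm]
  refine Finset.sum_eq_zero fun i hi => ?_
  rw [← Finset.sum_mul, ← Finset.sum_mul,
    sum_frobeniusFixed_pow hF ((Finset.mem_range_succ_iff.1 hi).trans_lt hj), zero_mul, zero_mul]

end PowerSums

section Moments

lemma not_two_pow_sub_one_dvd_add_two_pow {m i j : ℕ} (hi : i < m) (hj : j + 1 < 2 ^ (m - 1)) :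
    ¬ (2 ^ m - 1 : ℤ) ∣ j + 2 ^ i := fun hdvd => by
  have hm : (2 : ℤ) ^ m = 2 * 2 ^ (m - 1) := by rw [← pow_succ', Nat.sub_add_cancel (by omega)]
  have hi' : (2 : ℤ) ^ i ≤ 2 ^ (m - 1) := pow_le_pow_right₀ one_le_two (by omega)
  have hpos : (0 : ℤ) < 2 ^ i := by positivity
  have hj' : (j : ℤ) + 1 < 2 ^ (m - 1) := by exact_mod_cast hj
  have := Int.le_of_dvd (by omega) hdvd
  omega

lemma not_two_pow_sub_one_dvd_sub_two_pow {m i j : ℕ} (hi : i < m) (hodd : Odd j) (h1 : 1 < j)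
    (hj : j + 1 < 2 ^ (m - 1)) : ¬ (2 ^ m - 1 : ℤ) ∣ j - 2 ^ i := fun hdvd => by
  have hm : (2 : ℤ) ^ m = 2 * 2 ^ (m - 1) := by rw [← pow_succ', Nat.sub_add_cancel (by omega)]
  have hi' : (2 : ℤ) ^ i ≤ 2 ^ (m - 1) := pow_le_pow_right₀ one_le_two (by omega)
  have hpos : (0 : ℤ) < 2 ^ i := by positivity
  have hj' : (j : ℤ) + 1 < 2 ^ (m - 1) := by exact_mod_cast hj
  have hzero : (j : ℤ) - 2 ^ i = 0 :=
    Int.eq_zero_of_abs_lt_dvd hdvd (abs_lt.2 ⟨by omega, by omega⟩)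
  have hpow : j = 2 ^ i := by exact_mod_cast sub_eq_zero.1 hzero
  rcases i.eq_zero_or_pos with rfl | hipos
  · simp [hpow] at h1
  · exact Nat.not_even_iff_odd.2 hodd (hpow ▸ even_two.pow_of_ne_zero hipos.ne')

variable {F : Type*} [Field F] [Fintype F] [CharP F 2] {m : ℕ}

lemma sum_pow_mul_partialTrace_eq_zero (hF : Fintype.card F = 2 ^ (2 * m)) {j : ℕ} (hodd : Odd j)
    (h1 : 1 < j) (hj : j + 1 < 2 ^ (m - 1)) (w w' : F) :
    ∑ x ∈ frobeniusFixed F m, x ^ j * partialTrace F m (w * x + w' * x⁻¹) = 0 := by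
  have hterm (x : F) : x ^ j * partialTrace F m (w * x + w' * x⁻¹) =
      ∑ i ∈ Finset.range m, (w ^ 2 ^ i * x ^ ((j : ℤ) + 2 ^ i) +
        w' ^ 2 ^ i * x ^ ((j : ℤ) - 2 ^ i)) := by
    rw [partialTrace_apply, Finset.mul_sum]
    refine Finset.sum_congr rfl fun i hi => ?_
    have hne : (j : ℤ) - 2 ^ i ≠ 0 := fun h =>
      not_two_pow_sub_one_dvd_sub_two_pow (Finset.mem_range.1 hi) hodd h1 hj (h ▸ dvd_zero _)
    rw [add_pow_char_pow, mul_pow, mul_pow]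
    rcases eq_or_ne x 0 with rfl | hx
    · rw [zero_pow (by omega), zero_zpow _ (by positivity),
        zero_zpow _ hne]
      ring
    · rw [zpow_add₀ hx, zpow_sub₀ hx, zpow_natCast, ← Nat.cast_ofNat (R := ℤ), ← Nat.cast_pow,
        zpow_natCast, inv_pow]
      ring
  simp only [hterm]
  rw [Finset.sum_comm]
  refine Finset.sum_eq_zero fun i hi => ?_
  have hi' := Finset.mem_range.1 hi
  rw [Finset.sum_add_distrib, ← Finset.mul_sum, ← Finset.mul_sum,
    sum_frobeniusFixed_zpow hF (not_two_pow_sub_one_dvd_add_two_pow hi' hj),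
    sum_frobeniusFixed_zpow hF (not_two_pow_sub_one_dvd_sub_two_pow hi' hodd h1 hj),
    mul_zero, mul_zero, add_zero]

lemma sum_pow_eq_zero_of_partialTrace_add_eq_ite [DecidableEq F]
    (hF : Fintype.card F = 2 ^ (2 * m)) {j : ℕ} (hodd : Odd j) (h1 : 1 < j)
    (hj : j + 1 < 2 ^ (m - 1)) {w w' C : F} {E : Finset F} (hE : E ⊆ frobeniusFixed F m)
    (h : ∀ x ∈ frobeniusFixed F m, x ≠ 0 →
      partialTrace F m (w * x + w' * x⁻¹) + C = if x ∈ E then 0 else 1) :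
    ∑ x ∈ E, x ^ j = 0 := by
  have hlt : j < 2 ^ m - 1 := by
    have := Nat.pow_le_pow_right two_pos (Nat.sub_le m 1)
    omega
  have hterm : ∀ x ∈ frobeniusFixed F m, (if x ∈ E then x ^ j else 0) =
      x ^ j * partialTrace F m (w * x + w' * x⁻¹) + (C + 1) * x ^ j := fun x hx => by
    rcases eq_or_ne x 0 with rfl | hx0
    · simp [zero_pow (show j ≠ 0 by omega)]
    · have := h x hx hx0
      split_ifs at this ⊢ <;> grind
  calc ∑ x ∈ E, x ^ j
      = ∑ x ∈ frobeniusFixed F m, if x ∈ E then x ^ j else 0 := by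
        rw [Finset.sum_ite_mem, Finset.inter_eq_right.2 hE]
    _ = 0 := by
        rw [Finset.sum_congr rfl hterm, Finset.sum_add_distrib, ← Finset.mul_sum,
          sum_pow_mul_partialTrace_eq_zero hF hodd h1 hj, sum_frobeniusFixed_pow hF hlt, mul_zero,
          add_zero]

lemma eq_of_partialTrace_add_eq_ite [DecidableEq F] (hm : 4 ≤ m)
    (hF : Fintype.card F = 2 ^ (2 * m)) {w w' C x₁ x₂ : F} (hx₁ : x₁ ∈ frobeniusFixed F m)
    (hx₂ : x₂ ∈ frobeniusFixed F m) (hx₁0 : x₁ ≠ 0)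
    (h : ∀ x ∈ frobeniusFixed F m, x ≠ 0 →
      partialTrace F m (w * x + w' * x⁻¹) + C = if x = x₁ ∨ x = x₂ then 0 else 1) :
    x₁ = x₂ := by
  by_contra hne
  have hpow : 2 ^ 3 ≤ 2 ^ (m - 1) := Nat.pow_le_pow_right two_pos (by omega)
  have moment {j : ℕ} (hodd : Odd j) (h1 : 1 < j) (hj : j ≤ 5) : x₁ ^ j = x₂ ^ j := by
    rw [← CharTwo.add_eq_zero, ← Finset.sum_pair (f := (· ^ j)) hne]
    refine sum_pow_eq_zero_of_partialTrace_add_eq_ite hF hodd h1 (by omega)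
      (Finset.insert_subset hx₁ (Finset.singleton_subset_iff.2 hx₂)) (w := w) (w' := w') (C := C) ?_
    simpa only [Finset.mem_insert, Finset.mem_singleton] using h
  have h3 : x₁ ^ 3 = x₂ ^ 3 := moment (by decide) (by norm_num) (by norm_num)
  have h5 : x₁ ^ 5 = x₂ ^ 5 := moment (by decide) (by norm_num) (by norm_num)
  refine hne (mul_right_cancel₀ (pow_ne_zero 5 hx₁0) ?_)
  calc x₁ * x₁ ^ 5 = (x₁ ^ 3) ^ 2 := by ring
    _ = x₂ * x₁ ^ 5 := by rw [h3, h5]; ring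

end Moments

section PoleCancellation

open Polynomial

lemma natDegree_pow_mul_pow_sub_le {R : Type*} [CommSemiring R] {N D : R[X]}
    (hdeg : N.natDegree ≤ D.natDegree) {i n : ℕ} (hi : i ≤ n) :
    (N ^ i * D ^ (n - i)).natDegree ≤ D.natDegree * n :=
  calc (N ^ i * D ^ (n - i)).natDegree
      ≤ i * D.natDegree + (n - i) * D.natDegree :=
        natDegree_mul_le.trans (add_le_add
          (natDegree_pow_le.trans (Nat.mul_le_mul_left i hdeg)) natDegree_pow_le)
    _ = D.natDegree * n := by rw [← add_mul, Nat.add_sub_cancel' hi, mul_comm]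

lemma isRoot_of_partialTrace_div_eq {F : Type*} [Field F] [CharP F 2] {n : ℕ} {N D : F[X]}
    (hdeg : N.natDegree ≤ D.natDegree) {A : Finset F} (hA : ∀ t ∈ A, D.eval t ≠ 0)
    (hcard : D.natDegree * 2 ^ n < A.card) {k : F}
    (htr : ∀ t ∈ A, partialTrace F (n + 1) (N.eval t / D.eval t) = k) {r : F} (hr : D.IsRoot r) :
    N.IsRoot r := by
  let p : F[X] := ∑ i ∈ Finset.range (n + 1), N ^ 2 ^ i * D ^ (2 ^ n - 2 ^ i) + C k * D ^ 2 ^ n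
  have hle {i : ℕ} (hi : i ∈ Finset.range (n + 1)) : 2 ^ i ≤ 2 ^ n :=
    Nat.pow_le_pow_right two_pos (Finset.mem_range_succ_iff.1 hi)
  have hp_deg : p.natDegree ≤ D.natDegree * 2 ^ n := by
    refine natDegree_add_le_of_degree_le (natDegree_sum_le_of_forall_le _ _ fun i hi => ?_) ?_
    · exact natDegree_pow_mul_pow_sub_le hdeg (hle hi)
    · exact (natDegree_C_mul_le _ _).trans (natDegree_pow_le.trans_eq (mul_comm _ _))
  have hp_eval : ∀ t ∈ A, p.eval t = 0 := fun t ht => by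
    have hsum : ∑ i ∈ Finset.range (n + 1), N.eval t ^ 2 ^ i * D.eval t ^ (2 ^ n - 2 ^ i) =
        D.eval t ^ 2 ^ n * k := by
      rw [← htr t ht, partialTrace_apply, Finset.mul_sum]
      refine Finset.sum_congr rfl fun i hi => ?_
      rw [div_pow, pow_sub₀ _ (hA t ht) (hle hi)]
      ring
    simp only [p, eval_add, eval_finsetSum, eval_mul, eval_pow, eval_C, hsum, mul_comm k,
      CharTwo.add_self_eq_zero]
  have hp : p = 0 :=
    eq_zero_of_natDegree_lt_card_of_eval_eq_zero' p A hp_eval (hp_deg.trans_lt hcard)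
  have hpole : p.eval r = N.eval r ^ 2 ^ n := by
    simp only [p, eval_add, eval_finsetSum, eval_mul, eval_pow, eval_C, hr.eq_zero]
    rw [Finset.sum_eq_single n, Nat.sub_self, pow_zero, mul_one, zero_pow (by positivity), mul_zero,
      add_zero]
    · intro i hi hin
      have := Nat.pow_lt_pow_right one_lt_two
        (lt_of_le_of_ne (Finset.mem_range_succ_iff.1 hi) hin)
      rw [zero_pow (by omega), mul_zero]
    · simp
  rw [hp, eval_zero] at hpole
  exact eq_zero_of_pow_eq_zero hpole.symm

end PoleCancellation

section CircleAPN

variable {F : Type*} [Field F]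

/-- The APN property of `x ↦ (σ x) ^ 3 + a₁ (σ x) ^ 2 x + a₂ (σ x) x ^ 2 + a₃ x ^ 3`, stated for
`t = σ v / v` on the unit circle instead of for the direction `v`: the left-hand side is
`f (v * y + v) + f (v * y) + f v` divided by `v ^ 3`. -/
def CircleAPN (σ : F →+* F) (a₁ a₂ a₃ : F) : Prop :=
  ∀ t y : F, IsUnimodular σ t →
    t ^ 3 * (σ y ^ 2 + σ y) + a₁ * t ^ 2 * (σ y ^ 2 + y) + a₂ * t * (σ y + y ^ 2) +
      a₃ * (y ^ 2 + y) = 0 → y = 0 ∨ y = 1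

lemma IsAPN.circleAPN [Finite F] [CharP F 2] {σ : F →+* F} (hσ : Function.Involutive σ)
    {f : F → F} {a₁ a₂ a₃ : F}
    (hf : ∀ x, f x = σ x ^ 3 + a₁ * σ x ^ 2 * x + a₂ * σ x * x ^ 2 + a₃ * x ^ 3)
    (hAPN : IsAPN f) : CircleAPN σ a₁ a₂ a₃ := by
  intro t y ht hy
  by_contra! hne
  obtain ⟨v, hv0, hv⟩ := ht.exists_map_eq_mul hσ
  have hf0 : f 0 = 0 := by simp [hf]
  have hvy : f (v * y + v) + f (v * y) = f v := by
    rw [hf, hf, hf, map_add, map_mul, hv]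
    grind
  have hsub : {0, v, v * y} ⊆ {x : F | f (x + v) + f x = f v} := by
    rintro x (rfl | rfl | rfl)
    · simp [hf0]
    · simp [hf0, CharTwo.add_self_eq_zero]
    · exact hvy
  have hthree : ({0, v, v * y} : Set F).ncard = 3 :=
    Set.ncard_eq_three.2 ⟨0, v, v * y, hv0.symm, (mul_ne_zero hv0 hne.1).symm,
      fun h => hne.2 (mul_left_cancel₀ hv0 (by rw [← h, mul_one])), rfl⟩
  have := (Set.ncard_le_ncard hsub (Set.toFinite _)).trans (hAPN v hv0 (f v))
  omega

namespace CircleAPN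

variable [CharP F 2] [Fintype F] {m : ℕ} {a₁ a₂ a₃ t s Y : F}

lemma cubic_ne_zero (hm : 2 ≤ m) (hF : Fintype.card F = 2 ^ (2 * m))
    (h : CircleAPN (iterateFrobenius F 2 m) a₁ a₂ a₃)
    (ht : IsUnimodular (iterateFrobenius F 2 m) t) :
    t ^ 3 + a₁ * t ^ 2 + a₂ * t + a₃ ≠ 0 := fun hzero => by
  obtain ⟨y, hy, hy0, hy1⟩ := exists_mem_frobeniusFixed_ne hm hF
  rw [mem_frobeniusFixed] at hy
  rcases h t y ht (by rw [hy]; linear_combination (y ^ 2 + y) * hzero) with h | h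
  exacts [hy0 h, hy1 h]

lemma partialTrace_eq_add_one (hF : Fintype.card F = 2 ^ (2 * m))
    (h : CircleAPN (iterateFrobenius F 2 m) a₁ a₂ a₃)
    (ht : IsUnimodular (iterateFrobenius F 2 m) t) (hs : iterateFrobenius F 2 m s = s)
    (hs0 : s ≠ 0) (hY : iterateFrobenius F 2 m Y + Y = s ^ 2 + s)
    (hPY : (t ^ 3 + a₁ * t ^ 2 + a₂ * t + a₃) * Y =
      (t ^ 3 + a₁ * t ^ 2) * s ^ 2 + (t ^ 3 + a₂ * t) * s) :
    partialTrace F m Y = s + 1 := by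
  have hroots : partialTrace F m Y ^ 2 + partialTrace F m Y = s ^ 2 + s := by
    rw [← partialTrace_sq, ← map_add, partialTrace_sq_add_self, hY]
  have hne : partialTrace F m Y ≠ s := fun hTY => by
    obtain ⟨y, rfl⟩ := exists_sq_add_self_eq_of_map_partialTrace hF (by rw [hTY, hs])
    have hy : iterateFrobenius F 2 m y = y + s := by
      rw [partialTrace_sq_add_self] at hTY
      grind
    have : y = 0 ∨ y = 1 := h t y ht (by rw [hy]; grind)
    rcases this with rfl | rfl <;> simp_all
  grind

lemma not_map_add_self_eq_one (hm : 2 ≤ m) (hF : Fintype.card F = 2 ^ (2 * m))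
    (h : CircleAPN (iterateFrobenius F 2 m) a₁ a₂ a₃)
    (ht : IsUnimodular (iterateFrobenius F 2 m) t) {α β : F}
    (hα : (t ^ 3 + a₁ * t ^ 2 + a₂ * t + a₃) * α = t ^ 3 + a₁ * t ^ 2)
    (hβ : (t ^ 3 + a₁ * t ^ 2 + a₂ * t + a₃) * β = t ^ 3 + a₂ * t)
    (hα1 : iterateFrobenius F 2 m α + α = 1) : iterateFrobenius F 2 m β + β ≠ 1 := fun hβ1 => by
  have key {s : F} (hs : iterateFrobenius F 2 m s = s) (hs0 : s ≠ 0) :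
      partialTrace F m (α * s ^ 2 + β * s) = s + 1 := by
    refine h.partialTrace_eq_add_one hF ht hs hs0 ?_ ?_
    · rw [map_add, map_mul, map_mul, map_pow, hs]
      linear_combination s ^ 2 * hα1 + s * hβ1
    · linear_combination s ^ 2 * hα + s * hβ
  obtain ⟨y, hy, hy0, hy1⟩ := exists_mem_frobeniusFixed_ne hm hF
  rw [mem_frobeniusFixed] at hy
  have hone := key (map_one _) one_ne_zero
  have hadd : α * 1 ^ 2 + β * 1 =
      (α * y ^ 2 + β * y) + (α * (y + 1) ^ 2 + β * (y + 1)) := by grind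
  rw [hadd, map_add, key hy hy0,
    key (by rw [map_add, hy, map_one]) fun h => hy1 (CharTwo.add_eq_zero.1 h)] at hone
  grind

end CircleAPN

end CircleAPN

section ZeroPair

variable {F : Type*} [Field F] {σ : F →+* F} {a u k z z' t : F}

/-- Parametrization of the coefficients `a₁ = a`, `a₂ = u * a`, `a₃ = u * k` by the two zeros
`z`, `z'` of `jump`; its poles are `z ^ 2 / u` and `z' ^ 2 / u`. The pair is stable under
`z ↦ (σ z)⁻¹`: its members lie on the unit circle or are swapped. -/
structure IsZeroPair (σ : F →+* F) (a u k z z' : F) : Prop where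
  unimodular : IsUnimodular σ u
  map_eq : σ a = a
  stable : IsUnimodular σ z ∧ IsUnimodular σ z' ∨ z' * σ z = 1 ∧ z * σ z' = 1
  relation : u * a * (z ^ 2 + z' ^ 2) = u ^ 2 * k + z ^ 2 * z' ^ 2

/-- The value `s = σ y + y` forced on a solution `y` of the equation in `CircleAPN`. -/
def jump (u z z' t : F) : F :=
  u * ((t + z) * (t + z')) ^ 2 / (t * (u * t + z ^ 2) * (u * t + z' ^ 2))

/-- The value `y ^ 2 + y` forced on a solution `y` of the equation in `CircleAPN` with
`σ y + y = jump u z z' t`. -/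
def artinSchreierValue (u z z' t : F) : F :=
  u ^ 2 * t * (t + u) * ((t + z) * (t + z')) ^ 2 / ((u * t + z ^ 2) * (u * t + z' ^ 2)) ^ 2

lemma inv_mul_inv_add_inv_sq {w : F} (hu : u ≠ 0) (ht : t ≠ 0) (hw : w ≠ 0) :
    u⁻¹ * t⁻¹ + w⁻¹ ^ 2 = (u * t + w ^ 2) / (u * t * w ^ 2) := by
  field_simp
  ring

namespace IsZeroPair

lemma symm (h : IsZeroPair σ a u k z z') : IsZeroPair σ a u k z' z where
  unimodular := h.unimodular
  map_eq := h.map_eq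
  stable := h.stable.imp And.symm And.symm
  relation := by linear_combination h.relation

lemma map_eq_inv_or (h : IsZeroPair σ a u k z z') :
    σ z = z⁻¹ ∧ σ z' = z'⁻¹ ∨ σ z = z'⁻¹ ∧ σ z' = z⁻¹ :=
  h.stable.imp (And.imp eq_inv_of_mul_eq_one_right eq_inv_of_mul_eq_one_right)
    (And.imp eq_inv_of_mul_eq_one_right eq_inv_of_mul_eq_one_right)

lemma left_ne_zero (h : IsZeroPair σ a u k z z') : z ≠ 0 := by
  rcases h.stable with ⟨hz, -⟩ | ⟨-, hz⟩ <;> exact left_ne_zero_of_mul_eq_one hz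

lemma right_ne_zero (h : IsZeroPair σ a u k z z') : z' ≠ 0 :=
  h.symm.left_ne_zero

lemma map_jump (h : IsZeroPair σ a u k z z') (ht : IsUnimodular σ t) :
    σ (jump u z z' t) = jump u z z' t := by
  have hu0 := h.unimodular.ne_zero
  have hz0 := h.left_ne_zero
  have hz'0 := h.right_ne_zero
  have ht0 := ht.ne_zero
  rcases h.map_eq_inv_or with ⟨hz, hz'⟩ | ⟨hz, hz'⟩ <;>
  · simp only [jump, map_div₀, map_mul, map_pow, map_add, hz, hz', ht.map_eq_inv,
      h.unimodular.map_eq_inv, inv_mul_inv_add_inv_sq hu0 ht0 hz0,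
      inv_mul_inv_add_inv_sq hu0 ht0 hz'0]
    field_simp
    ring

variable [CharP F 2]

lemma map_artinSchreierValue_add_self (h : IsZeroPair σ a u k z z') (ht : IsUnimodular σ t) :
    σ (artinSchreierValue u z z' t) + artinSchreierValue u z z' t =
      jump u z z' t ^ 2 + jump u z z' t := by
  have hu0 := h.unimodular.ne_zero
  have hz0 := h.left_ne_zero
  have hz'0 := h.right_ne_zero
  have ht0 := ht.ne_zero
  rcases h.map_eq_inv_or with ⟨hz, hz'⟩ | ⟨hz, hz'⟩ <;>
  · simp only [artinSchreierValue, jump, map_div₀, map_mul, map_pow, map_add, hz, hz',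
      ht.map_eq_inv, h.unimodular.map_eq_inv, inv_mul_inv_add_inv_sq hu0 ht0 hz0,
      inv_mul_inv_add_inv_sq hu0 ht0 hz'0]
    field_simp
    grind

lemma cubic_mul_artinSchreierValue (h : IsZeroPair σ a u k z z') (ht : t ≠ 0) :
    (t ^ 3 + a * t ^ 2 + u * a * t + u * k) * artinSchreierValue u z z' t =
      (t ^ 3 + a * t ^ 2) * jump u z z' t ^ 2 + (t ^ 3 + u * a * t) * jump u z z' t := by
  have hrel := h.relation
  have hu0 := h.unimodular.ne_zero
  rw [artinSchreierValue, jump]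
  field_simp
  grind

end IsZeroPair

end ZeroPair

section Nondegeneracy

variable {F : Type*} [Field F] [Fintype F] [CharP F 2] {m : ℕ} {a u k z z' t : F}

namespace IsZeroPair

lemma partialTrace_artinSchreierValue_add_jump [DecidableEq F]
    (hF : Fintype.card F = 2 ^ (2 * m))
    (hAPN : CircleAPN (iterateFrobenius F 2 m) a (u * a) (u * k))
    (h : IsZeroPair (iterateFrobenius F 2 m) a u k z z')
    (ht : IsUnimodular (iterateFrobenius F 2 m) t)
    (hpole : u * t + z ^ 2 ≠ 0) (hpole' : u * t + z' ^ 2 ≠ 0) :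
    partialTrace F m (artinSchreierValue u z z' t) + jump u z z' t =
      if t = z ∨ t = z' then 0 else 1 := by
  have hzeros : (t + z) * (t + z') = 0 ↔ t = z ∨ t = z' := by
    rw [mul_eq_zero, CharTwo.add_eq_zero, CharTwo.add_eq_zero]
  split_ifs with htz <;> rw [← hzeros] at htz
  · simp [artinSchreierValue, jump, htz]
  · have hjump : jump u z z' t ≠ 0 :=
      div_ne_zero (mul_ne_zero h.unimodular.ne_zero (pow_ne_zero 2 htz))
        (mul_ne_zero (mul_ne_zero ht.ne_zero hpole) hpole')
    rw [hAPN.partialTrace_eq_add_one hF ht (h.map_jump ht) hjump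
      (h.map_artinSchreierValue_add_self ht) (h.cubic_mul_artinSchreierValue ht.ne_zero), add_comm,
      ← add_assoc, CharTwo.add_self_eq_zero, zero_add]

lemma sq_ne_mul (hm : 2 ≤ m) (hF : Fintype.card F = 2 ^ (2 * m))
    (hAPN : CircleAPN (iterateFrobenius F 2 m) a (u * a) (u * k))
    (h : IsZeroPair (iterateFrobenius F 2 m) a u k z z')
    (hz : IsUnimodular (iterateFrobenius F 2 m) z) : z' ^ 2 ≠ u * z := fun heq => by
  refine hAPN.cubic_ne_zero hm hF hz ((mul_eq_zero.1 ?_).resolve_left h.unimodular.ne_zero)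
  have := h.relation
  grind

lemma left_ne (hm : 2 ≤ m) (hF : Fintype.card F = 2 ^ (2 * m))
    (hAPN : CircleAPN (iterateFrobenius F 2 m) a (u * a) (u * k))
    (h : IsZeroPair (iterateFrobenius F 2 m) a u k z z') : z ≠ u := by
  rintro rfl
  have hz := h.unimodular
  have hne : z' ≠ z := by
    rintro rfl
    exact h.sq_ne_mul hm hF hAPN hz (sq z')
  have hz' : IsUnimodular (iterateFrobenius F 2 m) z' := by
    rcases h.stable with ⟨-, hz'⟩ | ⟨hz', -⟩
    · exact hz'
    · exact absurd (mul_right_cancel₀ (right_ne_zero_of_mul_eq_one hz) (hz'.trans hz.symm)) hne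
  have hz0 := hz.ne_zero
  have hz'0 := hz'.ne_zero
  have hden : z ^ 2 + z' ^ 2 ≠ 0 := fun h0 => hne (CharTwo.sq_inj.1 (CharTwo.add_eq_zero.1 h0)).symm
  have hquot : (z ^ 3 + a * z ^ 2 + z * a * z + z * k) * (z ^ 2 / (z ^ 2 + z' ^ 2)) =
      z ^ 3 + a * z ^ 2 := by
    have := h.relation
    field_simp
    grind
  have hmap : iterateFrobenius F 2 m (z ^ 2 / (z ^ 2 + z' ^ 2)) + z ^ 2 / (z ^ 2 + z' ^ 2) = 1 := by
    have hinv : z⁻¹ ^ 2 + z'⁻¹ ^ 2 = (z ^ 2 + z' ^ 2) / (z ^ 2 * z' ^ 2) := by field_simp; ring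
    rw [map_div₀, map_add, map_pow, map_pow, hz.map_eq_inv, hz'.map_eq_inv, hinv]
    field_simp
    ring
  exact hAPN.not_map_add_self_eq_one hm hF hz hquot (by rw [hquot]; ring) hmap hmap

end IsZeroPair

end Nondegeneracy

section DistinctZeros

variable {F : Type*} [Field F] {a u k z z' t : F}

/-- The residue at the pole `z ^ 2 / u` (for the parameter `u * t`) that remains of
`artinSchreierValue u z z'` after subtracting `correction ^ 2 + correction`. -/
def residue (u z z' : F) : F :=
  z ^ 2 * z' * (z + u) ^ 2 * (z' + u) * (z ^ 2 + u * z') / (u ^ 2 * (z + z') ^ 4)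

/-- The function `g` for which `artinSchreierValue + g ^ 2 + g` has only simple poles and vanishes
at infinity. -/
def correction (u z z' t : F) : F :=
  (t + (z ^ 2 + z' ^ 2) / u) / u +
    z ^ 2 * (z + u) ^ 2 * (z ^ 2 + u * z') / (u ^ 2 * (z + z') ^ 2 * (u * t + z ^ 2)) +
    z' ^ 2 * (z' + u) ^ 2 * (z' ^ 2 + u * z) / (u ^ 2 * (z + z') ^ 2 * (u * t + z' ^ 2))

variable [CharP F 2]

lemma artinSchreierValue_eq_residues (hu : u ≠ 0) (hne : z + z' ≠ 0)
    (hpole : u * t + z ^ 2 ≠ 0) (hpole' : u * t + z' ^ 2 ≠ 0) :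
    artinSchreierValue u z z' t = correction u z z' t ^ 2 + correction u z z' t +
      (residue u z z' / (u * t + z ^ 2) + residue u z' z / (u * t + z' ^ 2)) := by
  have hne' : z' + z ≠ 0 := by rwa [add_comm]
  rw [artinSchreierValue, correction, residue, residue]
  field_simp
  grind

lemma IsZeroPair.jump_add_correction_add_map {σ : F →+* F} (h : IsZeroPair σ a u k z z')
    (hne : z + z' ≠ 0) (ht : IsUnimodular σ t) (hpole : u * t + z ^ 2 ≠ 0)
    (hpole' : u * t + z' ^ 2 ≠ 0) :
    jump u z z' t + (correction u z z' t + σ (correction u z z' t)) =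
      (z + u) * (z' + u) / (u * (z + z')) := by
  have hu0 := h.unimodular.ne_zero
  have hz0 := h.left_ne_zero
  have hz'0 := h.right_ne_zero
  have ht0 := ht.ne_zero
  have hinv : z⁻¹ + z'⁻¹ = (z + z') / (z * z') := by
    field_simp
    ring
  have hinv' : z'⁻¹ + z⁻¹ = (z + z') / (z * z') := by rw [add_comm, hinv]
  rcases h.map_eq_inv_or with ⟨hz, hz'⟩ | ⟨hz, hz'⟩ <;>
  · simp only [correction, jump, map_div₀, map_mul, map_pow, map_add, hz, hz', ht.map_eq_inv,
      h.unimodular.map_eq_inv, hinv, hinv', inv_mul_inv_add_inv_sq hu0 ht0 hz0,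
      inv_mul_inv_add_inv_sq hu0 ht0 hz'0]
    field_simp
    grind

variable [Fintype F] {m : ℕ}

lemma IsZeroPair.partialTrace_residues [DecidableEq F] (hF : Fintype.card F = 2 ^ (2 * m))
    (hAPN : CircleAPN (iterateFrobenius F 2 m) a (u * a) (u * k))
    (h : IsZeroPair (iterateFrobenius F 2 m) a u k z z') (hne : z ≠ z')
    (ht : IsUnimodular (iterateFrobenius F 2 m) t)
    (hpole : u * t + z ^ 2 ≠ 0) (hpole' : u * t + z' ^ 2 ≠ 0) :
    partialTrace F m (residue u z z' / (u * t + z ^ 2) + residue u z' z / (u * t + z' ^ 2)) +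
      (z + u) * (z' + u) / (u * (z + z')) = if t = z ∨ t = z' then 0 else 1 := by
  have hne' : z + z' ≠ 0 := mt CharTwo.add_eq_zero.1 hne
  rw [← h.partialTrace_artinSchreierValue_add_jump hF hAPN ht hpole hpole',
    ← h.jump_add_correction_add_map hne' ht hpole hpole',
    artinSchreierValue_eq_residues h.unimodular.ne_zero hne' hpole hpole',
    map_add _ (correction u z z' t ^ 2 + correction u z z' t), partialTrace_sq_add_self]
  grind

end DistinctZeros

section DistinctZerosOnCircle

variable {F : Type*} [Field F] {σ : F →+* F} {u z z' t x : F}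

/-- The Möbius map carrying `𝔽_q ∪ {∞}` onto the unit circle, with `0` and `∞` sent to the poles
`z ^ 2 / u` and `z' ^ 2 / u`. -/
def circleParam (u z z' x : F) : F :=
  z * z' * (z + z' * x) / (u * (z' + z * x))

/-- The inverse of `circleParam`. -/
def circleCoord (u z z' t : F) : F :=
  z' * (u * t + z ^ 2) / (z * (u * t + z' ^ 2))

lemma IsUnimodular.map_circleCoord (hu : IsUnimodular σ u) (hz : IsUnimodular σ z)
    (hz' : IsUnimodular σ z') (ht : IsUnimodular σ t) :
    σ (circleCoord u z z' t) = circleCoord u z z' t := by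
  have hu0 := hu.ne_zero
  have hz0 := hz.ne_zero
  have hz'0 := hz'.ne_zero
  have ht0 := ht.ne_zero
  simp only [circleCoord, map_div₀, map_mul, map_add, map_pow, hu.map_eq_inv, hz.map_eq_inv,
    hz'.map_eq_inv, ht.map_eq_inv, inv_mul_inv_add_inv_sq hu0 ht0 hz0,
    inv_mul_inv_add_inv_sq hu0 ht0 hz'0]
  field_simp

variable [CharP F 2]

lemma IsUnimodular.add_mul_ne_zero (hz : IsUnimodular σ z) (hz' : IsUnimodular σ z') (hne : z ≠ z')
    (hx : σ x = x) : z + z' * x ≠ 0 := fun h0 => by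
  have hz0 := hz.ne_zero
  have hz'0 := hz'.ne_zero
  have hconj : z' + z * x = 0 := by
    have := congrArg σ h0
    rw [map_add, map_mul, hx, hz.map_eq_inv, hz'.map_eq_inv, map_zero] at this
    field_simp at this
    linear_combination this
  have : z ^ 2 = z' ^ 2 := by grind
  exact hne (CharTwo.sq_inj.1 this)

lemma isUnimodular_circleParam (hu : IsUnimodular σ u) (hz : IsUnimodular σ z)
    (hz' : IsUnimodular σ z') (hne : z ≠ z') (hx : σ x = x) :
    IsUnimodular σ (circleParam u z z' x) := by
  have hu0 := hu.ne_zero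
  have hz0 := hz.ne_zero
  have hz'0 := hz'.ne_zero
  have hadd := hz.add_mul_ne_zero hz' hne hx
  have hadd' := hz'.add_mul_ne_zero hz hne.symm hx
  have hmap : z⁻¹ + z'⁻¹ * x = (z' + z * x) / (z * z') := by field_simp
  have hmap' : z'⁻¹ + z⁻¹ * x = (z + z' * x) / (z * z') := by field_simp
  simp only [IsUnimodular, circleParam, map_div₀, map_mul, map_add, hx, hu.map_eq_inv,
    hz.map_eq_inv, hz'.map_eq_inv, hmap, hmap']
  field_simp

lemma mul_circleParam_add_sq (hu : u ≠ 0) (hden : z' + z * x ≠ 0) :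
    u * circleParam u z z' x + z ^ 2 = z * x * (z + z') ^ 2 / (z' + z * x) := by
  rw [circleParam]
  field_simp
  grind

lemma mul_circleParam_add_sq' (hu : u ≠ 0) (hden : z' + z * x ≠ 0) :
    u * circleParam u z z' x + z' ^ 2 = z' * (z + z') ^ 2 / (z' + z * x) := by
  rw [circleParam]
  field_simp
  grind

lemma mul_circleParam_add_sq_ne_zero (hu : u ≠ 0) (hz : z ≠ 0) (hx : x ≠ 0) (hne : z + z' ≠ 0)
    (hden : z' + z * x ≠ 0) : u * circleParam u z z' x + z ^ 2 ≠ 0 := by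
  rw [mul_circleParam_add_sq hu hden]
  exact div_ne_zero (mul_ne_zero (mul_ne_zero hz hx) (pow_ne_zero 2 hne)) hden

lemma mul_circleParam_add_sq_ne_zero' (hu : u ≠ 0) (hz' : z' ≠ 0) (hne : z + z' ≠ 0)
    (hden : z' + z * x ≠ 0) : u * circleParam u z z' x + z' ^ 2 ≠ 0 := by
  rw [mul_circleParam_add_sq' hu hden]
  exact div_ne_zero (mul_ne_zero hz' (pow_ne_zero 2 hne)) hden

lemma circleCoord_circleParam (hu : u ≠ 0) (hz : z ≠ 0) (hz' : z' ≠ 0) (hne : z + z' ≠ 0)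
    (hden : z' + z * x ≠ 0) : circleCoord u z z' (circleParam u z z' x) = x := by
  rw [circleCoord, mul_circleParam_add_sq hu hden, mul_circleParam_add_sq' hu hden]
  field_simp

lemma circleParam_circleCoord (hu : u ≠ 0) (hz : z ≠ 0) (hz' : z' ≠ 0) (hne : z + z' ≠ 0)
    (hpole' : u * t + z' ^ 2 ≠ 0) : circleParam u z z' (circleCoord u z z' t) = t := by
  have hnum : z + z' * circleCoord u z z' t = u * t * (z + z') ^ 2 / (z * (u * t + z' ^ 2)) := by
    rw [circleCoord]
    field_simp
    grind
  have hden : z' + z * circleCoord u z z' t = z' * (z + z') ^ 2 / (u * t + z' ^ 2) := by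
    rw [circleCoord]
    field_simp
    grind
  rw [circleParam, hnum, hden]
  field_simp

lemma eq_circleCoord_iff (hu : u ≠ 0) (hz : z ≠ 0) (hz' : z' ≠ 0) (hne : z + z' ≠ 0)
    (hden : z' + z * x ≠ 0) (hpole' : u * t + z' ^ 2 ≠ 0) :
    x = circleCoord u z z' t ↔ circleParam u z z' x = t :=
  ⟨fun hx => hx ▸ circleParam_circleCoord hu hz hz' hne hpole',
    fun ht => ht ▸ (circleCoord_circleParam hu hz hz' hne hden).symm⟩

lemma residues_circleParam (hu : u ≠ 0) (hz : z ≠ 0) (hz' : z' ≠ 0) (hx : x ≠ 0)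
    (hden : z' + z * x ≠ 0) (hne : z + z' ≠ 0) (ρ ρ' : F) :
    ρ / (u * circleParam u z z' x + z ^ 2) + ρ' / (u * circleParam u z z' x + z' ^ 2) =
      (ρ' * z / (z' * (z + z') ^ 2) * x + ρ * z' / (z * (z + z') ^ 2) * x⁻¹) +
        (ρ + ρ') / (z + z') ^ 2 := by
  rw [mul_circleParam_add_sq hu hden, mul_circleParam_add_sq' hu hden]
  field_simp
  ring

variable [Fintype F] {m : ℕ} {a k : F}

lemma IsZeroPair.eq_of_isUnimodular (hm : 4 ≤ m) (hF : Fintype.card F = 2 ^ (2 * m))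
    (hAPN : CircleAPN (iterateFrobenius F 2 m) a (u * a) (u * k))
    (h : IsZeroPair (iterateFrobenius F 2 m) a u k z z')
    (hz : IsUnimodular (iterateFrobenius F 2 m) z)
    (hz' : IsUnimodular (iterateFrobenius F 2 m) z') : z = z' := by
  classical
  by_contra hne
  have hu := h.unimodular
  have hadd : z + z' ≠ 0 := mt CharTwo.add_eq_zero.1 hne
  have hzu : z + u ≠ 0 := mt CharTwo.add_eq_zero.1 (h.left_ne (by omega) hF hAPN)
  have hz'u : z' + u ≠ 0 := mt CharTwo.add_eq_zero.1 (h.symm.left_ne (by omega) hF hAPN)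
  have hpole_z : u * z + z' ^ 2 ≠ 0 := fun h0 =>
    h.sq_ne_mul (by omega) hF hAPN hz (CharTwo.add_eq_zero.1 h0).symm
  have hpole_z' : u * z' + z' ^ 2 ≠ 0 := by
    rw [show u * z' + z' ^ 2 = z' * (z' + u) by ring]
    exact mul_ne_zero hz'.ne_zero hz'u
  have hcoord_ne : circleCoord u z z' z ≠ 0 := by
    rw [circleCoord, show u * z + z ^ 2 = z * (z + u) by ring]
    exact div_ne_zero (mul_ne_zero hz'.ne_zero (mul_ne_zero hz.ne_zero hzu))
      (mul_ne_zero hz.ne_zero hpole_z)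
  have param_coord {t : F} :=
    circleParam_circleCoord (t := t) hu.ne_zero hz.ne_zero hz'.ne_zero hadd
  have hcoord : circleCoord u z z' z = circleCoord u z z' z' := by
    refine eq_of_partialTrace_add_eq_ite hm hF
      (mem_frobeniusFixed.2 (hu.map_circleCoord hz hz' hz))
      (mem_frobeniusFixed.2 (hu.map_circleCoord hz hz' hz')) hcoord_ne
      (w := residue u z' z * z / (z' * (z + z') ^ 2))
      (w' := residue u z z' * z' / (z * (z + z') ^ 2))
      (C := partialTrace F m ((residue u z z' + residue u z' z) / (z + z') ^ 2) +
        (z + u) * (z' + u) / (u * (z + z'))) fun x hx hx0 => ?_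
    rw [mem_frobeniusFixed] at hx
    have hden := hz'.add_mul_ne_zero hz (Ne.symm hne) hx
    have hpole := mul_circleParam_add_sq_ne_zero hu.ne_zero hz.ne_zero hx0 hadd hden
    have hpole' := mul_circleParam_add_sq_ne_zero' hu.ne_zero hz'.ne_zero hadd hden
    have coord_iff {t : F} :=
      eq_circleCoord_iff (t := t) hu.ne_zero hz.ne_zero hz'.ne_zero hadd hden
    simp only [coord_iff hpole_z, coord_iff hpole_z']
    rw [← h.partialTrace_residues hF hAPN hne (isUnimodular_circleParam hu hz hz' hne hx) hpole
      hpole',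
      residues_circleParam hu.ne_zero hz.ne_zero hz'.ne_zero hx0 hden hadd,
      map_add _ (_ + _) ((_ + _) / _), add_assoc]
  exact hne (by rw [← param_coord hpole_z, hcoord, param_coord hpole_z'])

end DistinctZerosOnCircle

section SwappedZeros

variable {F : Type*} [Field F] {m : ℕ} {a u k z z' : F}

lemma card_nthRootsFinset_two_pow_add_one [Fintype F] (hF : Fintype.card F = 2 ^ (2 * m)) :
    (Polynomial.nthRootsFinset (2 ^ m + 1) (1 : F)).card = 2 ^ m + 1 := by
  have hdvd : 2 ^ m + 1 ∣ Fintype.card F - 1 := by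
    rw [hF, mul_comm, pow_mul, ← one_pow 2, Nat.sq_sub_sq]
    exact Dvd.intro _ rfl
  obtain ⟨ζ, hζ⟩ := exists_isPrimitiveRoot_of_dvd_card_sub_one hdvd
  exact hζ.card_nthRootsFinset

namespace IsZeroPair

variable {σ : F →+* F}

lemma ne_of_not_isUnimodular (h : IsZeroPair σ a u k z z') (hz : ¬IsUnimodular σ z) : z ≠ z' := by
  rintro rfl
  rcases h.stable with ⟨hz', -⟩ | ⟨hz', -⟩ <;> exact hz hz'

lemma right_not_isUnimodular (h : IsZeroPair σ a u k z z') (hz : ¬IsUnimodular σ z) :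
    ¬IsUnimodular σ z' := fun hz' => by
  rcases h.stable with ⟨hz'', -⟩ | ⟨-, hzz'⟩
  · exact hz hz''
  · exact h.ne_of_not_isUnimodular hz
      (mul_right_cancel₀ (right_ne_zero_of_mul_eq_one hz') (hzz'.trans hz'.symm))

end IsZeroPair

variable [CharP F 2]

open Polynomial in
lemma eq_zero_of_partialTrace_div_add_div_eq {n : ℕ} {ρ ρ' p p' : F} (hu : u ≠ 0) (hp : p ≠ p')
    {A : Finset F} (hA : ∀ t ∈ A, u * t + p ≠ 0) (hA' : ∀ t ∈ A, u * t + p' ≠ 0)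
    (hcard : 2 ^ (n + 1) < A.card)
    (htr : ∀ t ∈ A, partialTrace F (n + 1) (ρ / (u * t + p) + ρ' / (u * t + p')) = k) :
    ρ = 0 := by
  let L : F[X] := C u * X + C p
  let L' : F[X] := C u * X + C p'
  let N : F[X] := C ρ * L' + C ρ' * L
  have hL : L.natDegree = 1 := natDegree_linear hu
  have hL' : L'.natDegree = 1 := natDegree_linear hu
  have hLL' : (L * L').natDegree = 2 := by
    rw [natDegree_mul (ne_zero_of_natDegree_gt (n := 0) (by omega))
      (ne_zero_of_natDegree_gt (n := 0) (by omega)), hL, hL']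
  have hN : N.natDegree ≤ (L * L').natDegree := by
    rw [hLL']
    exact (natDegree_add_le_of_degree_le ((natDegree_C_mul_le ρ L').trans hL'.le)
      ((natDegree_C_mul_le ρ' L).trans hL.le)).trans one_le_two
  have hroot : N.IsRoot (p / u) := by
    refine isRoot_of_partialTrace_div_eq hN (A := A) (k := k) (fun t ht => ?_)
      (by rwa [hLL', ← pow_succ']) (fun t ht => ?_) ?_
    · simpa [L, L'] using ⟨hA t ht, hA' t ht⟩
    · rw [← htr t ht, div_add_div _ _ (hA t ht) (hA' t ht)]
      simp only [N, L, L', eval_add, eval_mul, eval_C, eval_X]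
      ring_nf
    · simp [L, mul_div_cancel₀ p hu, CharTwo.add_self_eq_zero]
  have : ρ * (p + p') = 0 := by
    simpa [N, L, L', mul_div_cancel₀ p hu, CharTwo.add_self_eq_zero] using hroot
  exact (mul_eq_zero.1 this).resolve_right (mt CharTwo.add_eq_zero.1 hp)

lemma residue_eq_zero_iff (hu : u ≠ 0) (hz : z ≠ 0) (hz' : z' ≠ 0) (hne : z ≠ z') (hzu : z ≠ u)
    (hz'u : z' ≠ u) : residue u z z' = 0 ↔ z ^ 2 = u * z' := by
  simp [residue, hu, hz, hz', hne, hzu, hz'u, CharTwo.add_eq_zero]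

lemma IsUnimodular.of_mul_add_sq_eq_zero {σ : F →+* F} {t : F} (hu : IsUnimodular σ u)
    (ht : IsUnimodular σ t) (h : u * t + z ^ 2 = 0) : IsUnimodular σ z := by
  refine IsUnimodular.of_sq ?_
  rw [IsUnimodular, ← CharTwo.add_eq_zero.1 h, map_mul, mul_mul_mul_comm, hu, ht, one_mul]

lemma even_of_isPrimitiveRoot_three {ω : F} (hω : IsPrimitiveRoot ω 3)
    (hfix : iterateFrobenius F 2 m ω = ω) : Even m := by
  by_contra hodd
  obtain ⟨n, rfl⟩ := Nat.not_even_iff_odd.1 hodd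
  have hmod : 2 ^ (2 * n + 1) % 3 = 2 := by
    rw [pow_succ, pow_mul, Nat.mul_mod, Nat.pow_mod]
    norm_num
  have hsq : ω ^ 2 = ω ^ 1 := by
    rw [pow_one, ← hmod, hω.eq_orderOf, pow_mod_orderOf, ← iterateFrobenius_def, hfix]
  exact absurd (hω.pow_inj (by norm_num) (by norm_num) hsq) (by norm_num)

lemma isUnimodular_iterateFrobenius_iff {t : F} :
    IsUnimodular (iterateFrobenius F 2 m) t ↔ t ^ (2 ^ m + 1) = 1 := by
  rw [IsUnimodular, iterateFrobenius_def, pow_succ']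

variable [Fintype F]

namespace IsZeroPair

lemma sq_eq_mul_of_not_isUnimodular (hm : 2 ≤ m) (hF : Fintype.card F = 2 ^ (2 * m))
    (hAPN : CircleAPN (iterateFrobenius F 2 m) a (u * a) (u * k))
    (h : IsZeroPair (iterateFrobenius F 2 m) a u k z z')
    (hz : ¬IsUnimodular (iterateFrobenius F 2 m) z) : z ^ 2 = u * z' := by
  classical
  have hne := h.ne_of_not_isUnimodular hz
  have hz' := h.right_not_isUnimodular hz
  obtain ⟨n, rfl⟩ : ∃ n, m = n + 1 := ⟨m - 1, by omega⟩
  have hu := h.unimodular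
  rw [← residue_eq_zero_iff hu.ne_zero h.left_ne_zero h.right_ne_zero hne (h.left_ne hm hF hAPN)
    (h.symm.left_ne hm hF hAPN)]
  have mem {t : F} (ht : t ∈ Polynomial.nthRootsFinset (2 ^ (n + 1) + 1) (1 : F)) :
      IsUnimodular (iterateFrobenius F 2 (n + 1)) t :=
    isUnimodular_iterateFrobenius_iff.2 ((Polynomial.mem_nthRootsFinset (Nat.succ_pos _) 1).1 ht)
  refine eq_zero_of_partialTrace_div_add_div_eq hu.ne_zero (mt CharTwo.sq_inj.1 hne)
    (fun t ht => mt (hu.of_mul_add_sq_eq_zero (mem ht)) hz)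
    (fun t ht => mt (hu.of_mul_add_sq_eq_zero (mem ht)) hz')
    ((Nat.lt_succ_self _).trans_eq (card_nthRootsFinset_two_pow_add_one hF).symm) (fun t ht => ?_)
    (ρ' := residue u z' z) (k := 1 + (z + u) * (z' + u) / (u * (z + z')))
  have htr := h.partialTrace_residues hF hAPN hne (mem ht)
    (mt (hu.of_mul_add_sq_eq_zero (mem ht)) hz) (mt (hu.of_mul_add_sq_eq_zero (mem ht)) hz')
  rw [if_neg (by rintro (rfl | rfl) <;> exact absurd (mem ht) ‹_›)] at htr
  rw [← htr, add_assoc, CharTwo.add_self_eq_zero, add_zero]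

lemma even_and_mul_eq_of_not_isUnimodular (hm : 2 ≤ m) (hF : Fintype.card F = 2 ^ (2 * m))
    (hAPN : CircleAPN (iterateFrobenius F 2 m) a (u * a) (u * k))
    (h : IsZeroPair (iterateFrobenius F 2 m) a u k z z')
    (hz : ¬IsUnimodular (iterateFrobenius F 2 m) z) : Even m ∧ u * a = k + u ^ 2 := by
  have hu0 := h.unimodular.ne_zero
  have hzu := h.left_ne hm hF hAPN
  have hsq := h.sq_eq_mul_of_not_isUnimodular hm hF hAPN hz
  have hsq' := h.symm.sq_eq_mul_of_not_isUnimodular hm hF hAPN (h.right_not_isUnimodular hz)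
  have hmul : z * z' = u ^ 2 := by
    refine mul_left_cancel₀ (mul_ne_zero h.left_ne_zero h.right_ne_zero) ?_
    linear_combination hsq * z' ^ 2 + u * z' * hsq'
  have hsum : z ^ 2 + z' ^ 2 = u ^ 2 := by grind
  constructor
  · have hcube : (z / u) ^ 3 = 1 := by
      rw [div_pow, div_eq_one_iff_eq (pow_ne_zero 3 hu0)]
      linear_combination z * hsq + u * hmul
    have hroot : IsPrimitiveRoot (z / u) 3 :=
      IsPrimitiveRoot.iff_orderOf.2 (orderOf_eq_prime hcube (mt (div_eq_one_iff_eq hu0).1 hzu))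
    refine even_of_isPrimitiveRoot_three hroot ?_
    have hσz : iterateFrobenius F 2 m z = z'⁻¹ :=
      eq_inv_of_mul_eq_one_right (h.stable.resolve_left fun h' => hz h'.1).1
    have hz'0 := h.right_ne_zero
    rw [map_div₀, hσz, h.unimodular.map_eq_inv]
    field_simp
    linear_combination -hmul
  · refine mul_left_cancel₀ (pow_ne_zero 2 hu0) ?_
    linear_combination h.relation - u * a * hsum + (z * z' + u ^ 2) * hmul

end IsZeroPair

end SwappedZeros

section DoubleZero

variable {F : Type*} [Field F] {a u k z y : F}

/-- The Möbius parametrization of the unit circle by `{y | σ y = y + 1} ∪ {∞}` that sends `∞` to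
the pole `z ^ 2 / u`. -/
def shiftedCircleParam (u z y : F) : F :=
  z ^ 2 * (y + 1) / (u * y)

variable [CharP F 2] {σ : F →+* F}

lemma isUnimodular_shiftedCircleParam (hu : IsUnimodular σ u) (hz : IsUnimodular σ z)
    (hy : σ y = y + 1) : IsUnimodular σ (shiftedCircleParam u z y) := by
  have hu0 := hu.ne_zero
  have hz0 := hz.ne_zero
  have hy0 : y ≠ 0 := by rintro rfl; simp at hy
  have hy1 : y + 1 ≠ 0 := by rwa [← hy, map_ne_zero]
  simp only [IsUnimodular, shiftedCircleParam, map_div₀, map_mul, map_pow, map_add, map_one,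
    hu.map_eq_inv, hz.map_eq_inv, hy, add_assoc, CharTwo.add_self_eq_zero, add_zero]
  field_simp

lemma mul_shiftedCircleParam_add_sq (hu : u ≠ 0) (hy : y ≠ 0) :
    u * shiftedCircleParam u z y + z ^ 2 = z ^ 2 / y := by
  rw [shiftedCircleParam]
  field_simp
  grind

lemma shiftedCircleParam_eq_self_iff (hu : u ≠ 0) (hz : z ≠ 0) (hzu : z ≠ u) (hy : y ≠ 0) :
    shiftedCircleParam u z y = z ↔ y + z / (z + u) = 0 := by
  have hzu' : z + u ≠ 0 := mt CharTwo.add_eq_zero.1 hzu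
  rw [shiftedCircleParam, div_eq_iff (mul_ne_zero hu hy), CharTwo.add_eq_zero, eq_div_iff hzu',
    ← mul_right_inj' hz]
  grind

lemma artinSchreierValue_shiftedCircleParam (hu : u ≠ 0) (hz : z ≠ 0) (hy : y ≠ 0) :
    artinSchreierValue u z z (shiftedCircleParam u z y) =
      (z ^ 2 / (u ^ 2 * y)) ^ 2 + z ^ 2 / (u ^ 2 * y) + ((z + u) ^ 2 * z ^ 2 / u ^ 4 +
        ((z + u) ^ 6 / (u ^ 4 * z ^ 2) * y ^ 4 + (z + u) ^ 4 / (u ^ 2 * z ^ 2) * y ^ 3 +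
        (z + u) ^ 4 / u ^ 4 * y ^ 2)) := by
  rw [artinSchreierValue, mul_shiftedCircleParam_add_sq hu hy, shiftedCircleParam]
  field_simp
  grind

lemma IsUnimodular.jump_shiftedCircleParam (hu : IsUnimodular σ u) (hz : IsUnimodular σ z)
    (hy : σ y = y + 1) :
    jump u z z (shiftedCircleParam u z y) +
        (z ^ 2 / (u ^ 2 * y) + σ (z ^ 2 / (u ^ 2 * y))) =
      (z + u) ^ 4 / (u ^ 2 * z ^ 2) * (y ^ 2 + y + 1) := by
  have hu0 := hu.ne_zero
  have hz0 := hz.ne_zero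
  have hy0 : y ≠ 0 := by rintro rfl; simp at hy
  have hy1 : y + 1 ≠ 0 := by rwa [← hy, map_ne_zero]
  rw [jump, mul_shiftedCircleParam_add_sq hu0 hy0, shiftedCircleParam, map_div₀, map_mul, map_pow,
    map_pow, hu.map_eq_inv, hz.map_eq_inv, hy]
  field_simp
  grind

lemma IsUnimodular.map_div_add (hz : IsUnimodular σ z) (hu : IsUnimodular σ u) (hzu : z + u ≠ 0) :
    σ (z / (z + u)) = z / (z + u) + 1 := by
  have hu0 := hu.ne_zero
  have hz0 := hz.ne_zero
  have hinv : z⁻¹ + u⁻¹ = (z + u) / (z * u) := by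
    field_simp
    ring
  rw [map_div₀, map_add, hz.map_eq_inv, hu.map_eq_inv, hinv]
  field_simp
  grind

variable [Fintype F] {m : ℕ}

lemma IsZeroPair.partialTrace_double [DecidableEq F] (hm : 2 ≤ m)
    (hF : Fintype.card F = 2 ^ (2 * m))
    (hAPN : CircleAPN (iterateFrobenius F 2 m) a (u * a) (u * k))
    (h : IsZeroPair (iterateFrobenius F 2 m) a u k z z)
    (hz : IsUnimodular (iterateFrobenius F 2 m) z) (hy : iterateFrobenius F 2 m y = y + 1) :
    partialTrace F m ((z + u) ^ 2 * z ^ 2 / u ^ 4 +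
        ((z + u) ^ 6 / (u ^ 4 * z ^ 2) * y ^ 4 + (z + u) ^ 4 / (u ^ 2 * z ^ 2) * y ^ 3 +
        (z + u) ^ 4 / u ^ 4 * y ^ 2)) + (z + u) ^ 4 / (u ^ 2 * z ^ 2) * (y ^ 2 + y + 1) =
      if y + z / (z + u) = 0 then 0 else 1 := by
  have hu := h.unimodular
  have hy0 : y ≠ 0 := by rintro rfl; simp at hy
  have hpole : u * shiftedCircleParam u z y + z ^ 2 ≠ 0 := by
    rw [mul_shiftedCircleParam_add_sq hu.ne_zero hy0]
    exact div_ne_zero (pow_ne_zero 2 hz.ne_zero) hy0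
  have htr := h.partialTrace_artinSchreierValue_add_jump hF hAPN
    (isUnimodular_shiftedCircleParam hu hz hy) hpole hpole
  simp only [or_self, shiftedCircleParam_eq_self_iff hu.ne_zero hz.ne_zero
    (h.left_ne hm hF hAPN) hy0] at htr
  rw [← htr, ← hu.jump_shiftedCircleParam hz hy,
    artinSchreierValue_shiftedCircleParam hu.ne_zero hz.ne_zero hy0, map_add _ (_ ^ 2 + _),
    partialTrace_sq_add_self]
  grind

lemma IsZeroPair.not_double (hm : 3 ≤ m) (hF : Fintype.card F = 2 ^ (2 * m))
    (hAPN : CircleAPN (iterateFrobenius F 2 m) a (u * a) (u * k))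
    (hz : IsUnimodular (iterateFrobenius F 2 m) z) :
    ¬IsZeroPair (iterateFrobenius F 2 m) a u k z z := fun h => by
  classical
  have hzu : z + u ≠ 0 := mt CharTwo.add_eq_zero.1 (h.left_ne (by omega) hF hAPN)
  have hpow : 2 ^ 3 ≤ 2 ^ m := Nat.pow_le_pow_right two_pos hm
  have hsum {j : ℕ} (hj : j < 7) := sum_frobeniusFixed_add_pow hF (show j < 2 ^ m - 1 by omega)
    (z / (z + u))
  have hsum_one : ∑ _x ∈ frobeniusFixed F m, (1 : F) = 0 := by
    simpa only [pow_zero] using hsum (j := 0) (by norm_num)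
  have hsum_id : ∑ x ∈ frobeniusFixed F m, (x + z / (z + u)) = 0 := by
    simpa only [pow_one] using hsum (j := 1) (by norm_num)
  have htr := Finset.sum_congr rfl fun x hx => h.partialTrace_double (by omega) hF hAPN hz
    (y := x + z / (z + u))
    (by rw [map_add, mem_frobeniusFixed.1 hx, hz.map_div_add h.unimodular hzu, add_assoc])
  have hconst (c : F) : ∑ _x ∈ frobeniusFixed F m, c = 0 := by
    rw [← mul_one c, ← Finset.mul_sum, hsum_one, mul_zero]
  have hite (x : F) : (if x + z / (z + u) + z / (z + u) = 0 then 0 else 1 : F) =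
      1 + if x = 0 then 1 else 0 := by
    rw [add_assoc, CharTwo.add_self_eq_zero, add_zero]
    split_ifs <;> simp [CharTwo.add_self_eq_zero]
  simp only [hite, Finset.sum_add_distrib, ← map_sum, ← Finset.mul_sum, hconst,
    hsum (j := 4) (by norm_num), hsum (j := 3) (by norm_num), hsum (j := 2) (by norm_num), hsum_id,
    Finset.sum_ite_eq', mem_frobeniusFixed.2 (map_zero _)] at htr
  simp at htr

end DoubleZero

section Existence

variable {F : Type*} [Field F] [Fintype F] [CharP F 2] {m : ℕ} {a u k : F}

lemma exists_add_eq_mul_eq (hF : Fintype.card F = 2 ^ (2 * m)) {n p : F}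
    (hn : IsUnimodular (iterateFrobenius F 2 m) n) (hp : iterateFrobenius F 2 m p * n = p) :
    ∃ r r', r + r' = p ∧ r * r' = n ∧
      (IsUnimodular (iterateFrobenius F 2 m) r ∧ IsUnimodular (iterateFrobenius F 2 m) r' ∨
        r' * iterateFrobenius F 2 m r = 1 ∧ r * iterateFrobenius F 2 m r' = 1) := by
  have hn0 := hn.ne_zero
  rcases eq_or_ne p 0 with rfl | hp0
  · obtain ⟨r, rfl⟩ := surjective_frobenius F 2 n
    exact ⟨r, r, CharTwo.add_self_eq_zero r, (sq r).symm, .inl ⟨hn.of_sq, hn.of_sq⟩⟩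
  have hσp : iterateFrobenius F 2 m p = p / n := eq_div_of_mul_eq hn0 hp
  have hfix : iterateFrobenius F 2 m (n / p ^ 2) = n / p ^ 2 := by
    rw [map_div₀, map_pow, hσp, hn.map_eq_inv]
    field_simp
  obtain ⟨y, hy⟩ := exists_sq_add_self_eq_of_map_partialTrace hF
    (by rw [map_partialTrace, hfix])
  have hmul : p * y * (p * (y + 1)) = n := by
    rw [eq_div_iff (pow_ne_zero 2 hp0)] at hy
    linear_combination hy
  refine ⟨p * y, p * (y + 1), by grind, hmul, ?_⟩
  have hroot : iterateFrobenius F 2 m y ^ 2 + iterateFrobenius F 2 m y = y ^ 2 + y := by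
    rw [← map_pow, ← map_add, hy, hfix]
  have hσy : iterateFrobenius F 2 m y = y + 1 ∨ iterateFrobenius F 2 m y = y := by grind
  refine hσy.imp (fun hσy => ?_) fun hσy => ?_ <;>
  · simp only [IsUnimodular, map_mul, map_add, map_one, hσp, hσy]
    field_simp
    grind

lemma exists_mul_add_eq (hF : Fintype.card F = 2 ^ (2 * m))
    (ha : iterateFrobenius F 2 m a = a) (ha0 : a ≠ 0) (k : F) :
    ∃ r r', a * (r + r') = k + r * r' ∧
      (IsUnimodular (iterateFrobenius F 2 m) r ∧ IsUnimodular (iterateFrobenius F 2 m) r' ∨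
        r' * iterateFrobenius F 2 m r = 1 ∧ r * iterateFrobenius F 2 m r' = 1) := by
  have hσσ := iterateFrobenius_involutive hF k
  rcases eq_or_ne k 1 with rfl | hk
  · exact ⟨1, 1, by grind, .inl (by simp [IsUnimodular])⟩
  have hk : k + 1 ≠ 0 := mt CharTwo.add_eq_zero.1 hk
  have hσk : iterateFrobenius F 2 m k + 1 ≠ 0 := by
    rwa [← map_one (iterateFrobenius F 2 m), ← map_add, map_ne_zero]
  obtain ⟨r, r', hadd, hmul, hstable⟩ := exists_add_eq_mul_eq hF
    (n := (k + 1) / (iterateFrobenius F 2 m k + 1))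
    (p := (k * iterateFrobenius F 2 m k + 1) / (a * (iterateFrobenius F 2 m k + 1)))
    (by rw [IsUnimodular, map_div₀, map_add, map_add, hσσ, map_one]; field_simp)
    (by simp only [map_div₀, map_add, map_mul, ha, hσσ, map_one]; field_simp)
  refine ⟨r, r', ?_, hstable⟩
  rw [hadd, hmul]
  field_simp
  grind

lemma exists_isZeroPair (hF : Fintype.card F = 2 ^ (2 * m))
    (hu : IsUnimodular (iterateFrobenius F 2 m) u) (ha : iterateFrobenius F 2 m a = a)
    (ha0 : a ≠ 0) (k : F) : ∃ z z', IsZeroPair (iterateFrobenius F 2 m) a u k z z' := by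
  obtain ⟨r, r', hrel, hstable⟩ := exists_mul_add_eq hF ha ha0 k
  obtain ⟨z, hz⟩ : ∃ z, z ^ 2 = u * r := surjective_frobenius F 2 (u * r)
  obtain ⟨z', hz'⟩ : ∃ z', z' ^ 2 = u * r' := surjective_frobenius F 2 (u * r')
  have hmul {w w' s s' : F} (hw : w ^ 2 = u * s) (hw' : w' ^ 2 = u * s')
      (hs : s * iterateFrobenius F 2 m s' = 1) : w * iterateFrobenius F 2 m w' = 1 := by
    refine CharTwo.sq_inj.1 ?_
    rw [mul_pow, ← map_pow, hw, hw', map_mul, mul_mul_mul_comm, hu, hs, one_mul, one_pow]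
  exact ⟨z, z',
    { unimodular := hu
      map_eq := ha
      stable := hstable.imp (And.imp (hmul hz hz) (hmul hz' hz'))
        (And.imp (hmul hz' hz) (hmul hz hz'))
      relation := by rw [hz, hz']; linear_combination u ^ 2 * hrel }⟩

lemma CircleAPN.even_and_mul_eq (hm : 4 ≤ m) (hF : Fintype.card F = 2 ^ (2 * m))
    (hAPN : CircleAPN (iterateFrobenius F 2 m) a (u * a) (u * k))
    (hu : IsUnimodular (iterateFrobenius F 2 m) u) (ha : iterateFrobenius F 2 m a = a)
    (ha0 : a ≠ 0) : Even m ∧ u * a = k + u ^ 2 := by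
  obtain ⟨z, z', h⟩ := exists_isZeroPair hF hu ha ha0 k
  refine h.even_and_mul_eq_of_not_isUnimodular (by omega) hF hAPN fun hz => ?_
  by_cases hz' : IsUnimodular (iterateFrobenius F 2 m) z'
  · obtain rfl := h.eq_of_isUnimodular hm hF hAPN hz hz'
    exact IsZeroPair.not_double (by omega) hF hAPN hz h
  · exact h.symm.right_not_isUnimodular hz' hz

end Existence

section Parametrization

variable {F : Type*} [Field F] [CharP F 2] [PerfectRing F 2] {σ : F →+* F} {a u k : F}

lemma exists_sq_eq_add_one_and_map_eq_div (hu : IsUnimodular σ u) (ha : σ a = a)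
    (hrel : u * a = k + u ^ 2) : ∃ l, l ^ 2 = k + 1 ∧ σ l = l / u := by
  obtain ⟨l, hl⟩ : ∃ l, l ^ 2 = k + 1 := surjective_frobenius F 2 (k + 1)
  refine ⟨l, hl, CharTwo.sq_inj.1 ?_⟩
  have hu0 := hu.ne_zero
  have hconj := congrArg σ hrel
  simp only [map_mul, map_add, map_pow, hu.map_eq_inv, ha] at hconj
  rw [← map_pow, hl, map_add, map_one, div_pow, hl]
  field_simp at hconj ⊢
  grind

lemma exists_isUnimodular_parametrization (hu : IsUnimodular σ u) (hu1 : u ≠ 1) (ha : σ a = a)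
    (hrel : u * a = k + u ^ 2) :
    ∃ z, IsUnimodular σ z ∧ a = (u ^ 3 + z) ^ 2 / (u * (u ^ 2 + z) ^ 2) ∧
      u * a = (u ^ 3 + z) ^ 2 / (u ^ 2 + z) ^ 2 ∧
      u * k = u * z ^ 2 * (u + 1) ^ 2 / (u ^ 2 + z) ^ 2 := by
  have hu0 := hu.ne_zero
  have hu1' : u + 1 ≠ 0 := mt CharTwo.add_eq_zero.1 hu1
  obtain ⟨l, hl, hσl⟩ := exists_sq_eq_add_one_and_map_eq_div hu ha hrel
  have hlu : l + u ≠ 0 := fun h0 => hu1 <| by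
    rw [CharTwo.add_eq_zero.1 h0, div_self hu0] at hσl
    rwa [IsUnimodular, hσl, mul_one] at hu
  have hl1 : l + 1 ≠ 0 := fun h0 => hu1 <| by
    rw [CharTwo.add_eq_zero.1 h0, map_one, eq_div_iff hu0, one_mul] at hσl
    exact hσl
  have hua : u * a = (l + u + 1) ^ 2 := by grind
  have hquad : u ^ 2 + u ^ 2 * (l + 1) / (l + u) = u ^ 2 * (u + 1) / (l + u) := by
    field_simp
    grind
  have hcub : u ^ 3 + u ^ 2 * (l + 1) / (l + u) =
      u ^ 2 * (u + 1) * (l + u + 1) / (l + u) := by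
    field_simp
    grind
  refine ⟨u ^ 2 * (l + 1) / (l + u), ?_, ?_, ?_, ?_⟩
  · have hinv : l / u + u⁻¹ = (l + 1) / u := by field_simp
    simp only [IsUnimodular, map_div₀, map_mul, map_pow, map_add, map_one, hσl, hu.map_eq_inv, hinv]
    field_simp
  · rw [hquad, hcub]
    field_simp
    linear_combination hua
  · rw [hquad, hcub, hua]
    field_simp
  · rw [hquad]
    field_simp
    grind

end Parametrization

/-- If `f(x) = x^{3q} + a₁x^{2q+1} + a₂x^{q+2} + a₃x³` with `a₁ ∈ 𝔽_q`, `a₂ ≠ 0`,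
`a₁/a₂ ∈ U` is APN, then `m` is even and either all coefficients lie in `𝔽_q` or they have
the stated parametric form with `u, z ∈ U`. Here `q = 2^m`, `m ≥ 4`,
`U = {z : z^(q+1) = 1}`, and `a ∈ 𝔽_q` is expressed as `a^(2^m) = a`. -/
theorem kim_type_ratio_in_unit_circle
    (m : ℕ) (hm : 4 ≤ m) (F : Type*) [Field F] [Fintype F]
    (hcard : Fintype.card F = 2 ^ (2 * m))
    (a₁ a₂ a₃ : F) (ha₁ : a₁ ^ (2 ^ m) = a₁) (ha₂ : a₂ ≠ 0)
    (hU : (a₁ / a₂) ^ (2 ^ m + 1) = 1)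
    (f : F → F)
    (hf : ∀ x : F, f x = x ^ (3 * 2 ^ m) + a₁ * x ^ (2 * 2 ^ m + 1)
        + a₂ * x ^ (2 ^ m + 2) + a₃ * x ^ 3)
    (hAPN : IsAPN f) :
    Even m ∧
      ((a₁ ^ (2 ^ m) = a₁ ∧ a₂ ^ (2 ^ m) = a₂ ∧ a₃ ^ (2 ^ m) = a₃) ∨
        ∃ u z : F, u ^ (2 ^ m + 1) = 1 ∧ z ^ (2 ^ m + 1) = 1 ∧
          a₁ = (u ^ 3 + z) ^ 2 / (u * (u ^ 2 + z) ^ 2) ∧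
          a₂ = (u ^ 3 + z) ^ 2 / (u ^ 2 + z) ^ 2 ∧
          a₃ = u * z ^ 2 * (u + 1) ^ 2 / (u ^ 2 + z) ^ 2) := by
  have : CharP F 2 := charP_of_card_eq_prime_pow hcard
  have ha₁0 : a₁ ≠ 0 := by
    rintro rfl
    simp at hU
  obtain ⟨u, rfl⟩ : ∃ u, a₂ = u * a₁ := ⟨a₂ / a₁, (div_mul_cancel₀ a₂ ha₁0).symm⟩
  have hu0 : u ≠ 0 := left_ne_zero_of_mul ha₂
  obtain ⟨k, rfl⟩ : ∃ k, a₃ = u * k := ⟨a₃ / u, (mul_div_cancel₀ a₃ hu0).symm⟩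
  have hu : u ^ (2 ^ m + 1) = 1 := by
    rwa [div_mul_cancel_right₀ ha₁0, inv_pow, inv_eq_one] at hU
  have hcirc : CircleAPN (iterateFrobenius F 2 m) a₁ (u * a₁) (u * k) :=
    hAPN.circleAPN (iterateFrobenius_involutive hcard) fun x => by
      rw [hf, iterateFrobenius_def]; ring
  obtain ⟨heven, hrel⟩ := hcirc.even_and_mul_eq hm hcard (isUnimodular_iterateFrobenius_iff.2 hu)
    ha₁ ha₁0
  refine ⟨heven, ?_⟩
  rcases eq_or_ne u 1 with rfl | hu1
  · have hk : k = a₁ + 1 := by grind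
    simp [hk, add_pow_char_pow, ha₁]
  · obtain ⟨z, hz, hparam⟩ := exists_isUnimodular_parametrization
      (isUnimodular_iterateFrobenius_iff.2 hu) hu1 ha₁ hrel
    exact .inr ⟨u, z, hu, isUnimodular_iterateFrobenius_iff.1 hz, hparam⟩
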